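/- arXiv:1908.08896 — 4 statements merged into one kernel-verified Lean document; each statement's English description precedes it below -/
import Mathlib

section
/- Let k be any field. The generic 3×3 determinant det₃ cannot be written as a linear combination of 14 or fewer cubes of linear forms; that is, there do not exist scalars c₁,…,c₁₄ ∈ k and linear forms ℓ₁,…,ℓ₁₄ ∈ k[x_{1,1},…,x_{3,3}] with det₃ = c₁ℓ₁³ + ⋯ + c₁₄ℓ₁₄³. Equivalently, the Waring rank of det₃ is at least 15. -/
open MvPolynomial

/-- The generic 3×3 determinant, a cubic form in the 9 variables `x_{i,j}`. -/
noncomputable def det3 (k : Type*) [CommRing k] : MvPolynomial (Fin 3 × Fin 3) k :=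
  Matrix.det (Matrix.of fun i j : Fin 3 => X (i, j))

/-- The linear form with coefficient vector `a`. -/
noncomputable def linForm {k : Type*} [CommRing k] {n : Type*} [Fintype n]
    (a : n → k) : MvPolynomial n k :=
  ∑ i, C (a i) * X i

/-- The full polarization of the determinant of 3×3 matrices. -/
def detPolarization {k : Type*} [CommRing k] (A B C : Matrix (Fin 3) (Fin 3) k) : k :=
  (A + B + C).det - (A + B).det - (A + C).det - (B + C).det + A.det + B.det + C.det

theorem detPolarization_mul_left {k : Type*} [CommRing k] (M A B C : Matrix (Fin 3) (Fin 3) k) :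
    detPolarization (M * A) (M * B) (M * C) = M.det * detPolarization A B C := by
  simp only [detPolarization, ← mul_add, Matrix.det_mul]
  ring

theorem detPolarization_one {k : Type*} [CommRing k] (B C : Matrix (Fin 3) (Fin 3) k) :
    detPolarization 1 B C = B.trace * C.trace - (B * C).trace := by
  simp [detPolarization, Matrix.det_fin_three, Matrix.trace_fin_three, Matrix.mul_apply,
    Fin.sum_univ_three]
  ring

/-- In characteristic other than two, the Hessian of the determinant at an invertible matrix is
nondegenerate. -/
theorem eq_zero_of_detPolarization_eq_zero {k : Type*} [Field k] (h2 : (2 : k) ≠ 0)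
    {M N : Matrix (Fin 3) (Fin 3) k} (hM : M.det ≠ 0)
    (h : ∀ C, detPolarization M N C = 0) : N = 0 := by
  have hu : IsUnit M.det := hM.isUnit
  obtain ⟨B, rfl⟩ : ∃ B, N = M * B := ⟨M⁻¹ * N, (Matrix.mul_nonsing_inv_cancel_left _ _ hu).symm⟩
  have hB : ∀ C : Matrix (Fin 3) (Fin 3) k, B.trace * C.trace - (B * C).trace = 0 := by
    intro C
    have := h (M * C)
    rw [← detPolarization_one]
    rw [← mul_one M, mul_assoc, one_mul, mul_assoc, one_mul, detPolarization_mul_left] at this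
    exact (mul_eq_zero.mp this).resolve_left hM
  have htr : B.trace = 0 := by
    have := hB 1
    simp only [mul_one, Matrix.trace_one, Fintype.card_fin] at this
    have h' : 2 * B.trace = 0 := by push_cast at this; linear_combination this
    exact (mul_eq_zero.mp h').resolve_left h2
  have hB0 : B = 0 := by
    ext i j
    simpa [htr, Matrix.trace_mul_single] using hB (Matrix.single j i 1)
  rw [hB0, mul_zero]

universe u

/-- A separating family of linear forms contains the coordinates with respect to some basis. -/
theorem exists_basis_coord_of_separating {k V : Type*} {ι : Type u} [Field k]
    [AddCommGroup V] [Module k V] [FiniteDimensional k V]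
    (l : ι → Module.Dual k V) (hl : ∀ v, (∀ i, l i v = 0) → v = 0) :
    ∃ (κ : Type u) (f : κ → ι) (b : Module.Basis κ k V), Function.Injective f ∧
      ∀ i j, i ≠ j → l (f i) (b j) = 0 := by
  classical
  have hspan : Submodule.span k (Set.range l) = ⊤ := by
    rw [← Subspace.dualCoannihilator_dualAnnihilator_eq (W := Submodule.span k (Set.range l))]
    have : (Submodule.span k (Set.range l)).dualCoannihilator = ⊥ := by
      rw [eq_bot_iff]
      intro v hv
      rw [Submodule.mem_dualCoannihilator] at hv
      exact hl v fun i => hv _ (Submodule.subset_span ⟨i, rfl⟩)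
    rw [this, Submodule.dualAnnihilator_bot]
  obtain ⟨κ, f, hf, hs, hli⟩ := exists_linearIndependent' k l
  let d := Module.Basis.mk hli (by rw [hs, hspan])
  have : Finite κ := Module.Finite.finite_basis d
  refine ⟨κ, f, d.dualBasis.map (Module.evalEquiv k V).symm, hf, fun i j hij => ?_⟩
  have hd : l (f i) = d i := by simp [d]
  rw [hd, Module.Basis.map_apply, Module.apply_evalEquiv_symm_apply,
    Module.Basis.dualBasis_apply_self, if_neg hij]

/-- A weighted sum of trilinear cubes that vanishes on all triples of basis vectors vanishes. -/
theorem sum_mul_mul_eq_zero_of_basis {k V ι κ : Type*} [Field k] [AddCommGroup V] [Module k V]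
    [Fintype ι] (c : ι → k) (l : ι → Module.Dual k V) (b : Module.Basis κ k V)
    (h : ∀ p q r, ∑ i, c i * l i (b p) * l i (b q) * l i (b r) = 0) (A B C : V) :
    ∑ i, c i * l i A * l i B * l i C = 0 := by
  have step : ∀ d : ι → k, (∀ p, ∑ i, d i * l i (b p) = 0) → ∀ v, ∑ i, d i * l i v = 0 := by
    intro d hd v
    have : ∑ i, d i • l i = 0 := b.ext fun p => by simpa using hd p
    simpa using LinearMap.congr_fun this v
  refine step _ (fun r => ?_) C
  have h1 : ∀ p, ∑ i, c i * l i (b p) * l i (b r) * l i B = 0 := fun p => step _ (fun q => by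
    rw [← h p q r]; exact Finset.sum_congr rfl fun i _ => by ring) B
  have h2 := step (fun i => c i * l i B * l i (b r)) (fun p => by
    rw [← h1 p]; exact Finset.sum_congr rfl fun i _ => by ring) A
  rw [← h2]
  exact Finset.sum_congr rfl fun i _ => by ring

/-- The determinant of 3×3 matrices, as a function, is not a combination of 14 cubes. -/
theorem det_fin_three_ne_sum_cubes {k : Type*} [Field k] (c : Fin 14 → k)
    (l : Fin 14 → Module.Dual k (Matrix (Fin 3) (Fin 3) k))
    (h : ∀ M, M.det = ∑ i, c i * l i M ^ 3) : False := by
  classical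
  have hpol : ∀ A B C, detPolarization A B C = 6 * ∑ i, c i * l i A * l i B * l i C := by
    intro A B C
    simp only [detPolarization, h, map_add, Finset.mul_sum, ← Finset.sum_sub_distrib,
      ← Finset.sum_add_distrib]
    exact Finset.sum_congr rfl fun i _ => by ring
  have h6 : (6 : k) ≠ 0 := by
    intro h6
    have := hpol 1 (Matrix.single 0 0 1) (Matrix.single 1 1 1)
    rw [h6, zero_mul, detPolarization_one] at this
    simp at this
  have h2 : (2 : k) ≠ 0 := fun h2 => h6 (by linear_combination 3 * h2)
  have hsep : ∀ N, (∀ i, l i N = 0) → N = 0 := fun N hN =>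
    eq_zero_of_detPolarization_eq_zero h2 (M := 1) (by simp) fun C => by
      rw [hpol]; simp [hN]
  obtain ⟨κ, f, b, hf, hfb⟩ := exists_basis_coord_of_separating l hsep
  have : Fintype κ := Fintype.ofInjective f hf
  have hκ : Fintype.card κ = 9 := by
    rw [← Module.finrank_eq_card_basis b, Module.finrank_matrix]; simp
  -- Some nonsingular matrix lies in the span of three basis vectors.
  obtain ⟨p, q, r, M, hM, hpqr⟩ : ∃ p q r, ∃ M : Matrix (Fin 3) (Fin 3) k, M.det ≠ 0 ∧
      ∀ s, s ≠ p → s ≠ q → s ≠ r → l (f s) M = 0 := by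
    by_contra! hcon
    have hdet : ∀ p q r, ∀ M : Matrix (Fin 3) (Fin 3) k,
        (∀ s, s ≠ p → s ≠ q → s ≠ r → l (f s) M = 0) → M.det = 0 := by
      intro p q r M hM
      by_contra hne
      obtain ⟨s, h1, h2, h3, h4⟩ := hcon p q r M hne
      exact h4 (hM s h1 h2 h3)
    have hzero := sum_mul_mul_eq_zero_of_basis c l b fun p q r => by
      refine (mul_eq_zero.mp ((hpol (b p) (b q) (b r)).symm.trans ?_)).resolve_left h6
      rw [detPolarization]
      simp +contextual [hdet p q r _, hfb]
    have := hpol 1 (Matrix.single 0 0 1) (Matrix.single 1 1 1)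
    rw [hzero, mul_zero, detPolarization_one] at this
    simp at this
  -- At most eight of the forms are nonzero at `M`.
  have hcard : Fintype.card {i // l i M ≠ 0} < 9 := by
    have hsub : (Finset.univ \ {p, q, r} : Finset κ).map ⟨f, hf⟩ ⊆
        Finset.univ.filter fun i => l i M = 0 := by
      intro i hi
      obtain ⟨s, hs, rfl⟩ := Finset.mem_map.mp hi
      simp only [Finset.mem_sdiff, Finset.mem_univ, true_and, Finset.mem_insert,
        Finset.mem_singleton, not_or] at hs
      simpa using hpqr s hs.1 hs.2.1 hs.2.2
    have h1 := Finset.card_le_card hsub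
    rw [Finset.card_map] at h1
    have h3 := Finset.le_card_sdiff ({p, q, r} : Finset κ) Finset.univ
    have h4 : ({p, q, r} : Finset κ).card ≤ 3 := Finset.card_le_three
    rw [Finset.card_univ, hκ] at h3
    have h5 := Fintype.card_subtype_compl fun i => l i M = 0
    have h7 := Fintype.card_subtype fun i => l i M = 0
    rw [Fintype.card_fin] at h5
    have h6 : Fintype.card {i // l i M ≠ 0} = Fintype.card {i // ¬ l i M = 0} := rfl
    omega
  let F : Matrix (Fin 3) (Fin 3) k →ₗ[k] ({i // l i M ≠ 0} → k) := LinearMap.pi fun i => l i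
  have hF : LinearMap.ker F ≠ ⊥ := LinearMap.ker_ne_bot_of_finrank_lt (by
    rw [Module.finrank_fintype_fun_eq_card, Module.finrank_matrix]; simpa using hcard)
  obtain ⟨N, hN, hN0⟩ := Submodule.exists_mem_ne_zero_of_ne_bot hF
  refine hN0 (eq_zero_of_detPolarization_eq_zero h2 hM fun C => ?_)
  rw [hpol, Finset.sum_eq_zero, mul_zero]
  intro i _
  by_cases hi : l i M = 0
  · simp [hi]
  · have : l i N = 0 := congr_fun (LinearMap.mem_ker.mp hN) ⟨i, hi⟩
    simp [this]

/-- The Waring rank of `det₃` is at least 15: there is no expression of `det₃` as a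
linear combination of 14 (or fewer) cubes of linear forms. -/
theorem det3_not_sum_of_14_cubes (k : Type*) [Field k] :
    ¬ ∃ (c : Fin 14 → k) (a : Fin 14 → (Fin 3 × Fin 3) → k),
        det3 k = ∑ i, C (c i) * linForm (a i) ^ 3 := by
  rintro ⟨c, a, h⟩
  refine det_fin_three_ne_sum_cubes c
    (fun i => ∑ x : Fin 3 × Fin 3, a i x • Matrix.entryLinearMap k k x.1 x.2) fun M => ?_
  have := congr_arg (eval fun x => M x.1 x.2) h
  simpa [det3, linForm, Matrix.det_fin_three] using this
end

section
/- Let k be a field of characteristic 0. For every linear form ℓ ∈ k[x_{1,1},…,x_{3,3}], the cubic det₃ − ℓ³ cannot be written as a linear combination of 13 or fewer cubes of linear forms; that is, the Waring rank of det₃ − ℓ³ is at least 14. -/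
open MvPolynomial

namespace Matrix

variable {R : Type*} [CommRing R]

/-- The polarization `B ↦ adj (A + B) - adj A - adj B` of the (quadratic) adjugate of
`3 × 3` matrices, as a linear map in `B`. -/
def polarAdjugate (A : Matrix (Fin 3) (Fin 3) R) :
    Matrix (Fin 3) (Fin 3) R →ₗ[R] Matrix (Fin 3) (Fin 3) R where
  toFun B := adjugate (A + B) - adjugate A - adjugate B
  map_add' B C := by
    ext i j
    fin_cases i <;> fin_cases j <;> simp [adjugate_fin_three] <;> ring
  map_smul' r B := by
    ext i j
    fin_cases i <;> fin_cases j <;> simp [adjugate_fin_three] <;> ring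

theorem polarAdjugate_apply (A B : Matrix (Fin 3) (Fin 3) R) :
    polarAdjugate A B = adjugate (A + B) - adjugate A - adjugate B := rfl

theorem polarAdjugate_comm (A B : Matrix (Fin 3) (Fin 3) R) :
    polarAdjugate A B = polarAdjugate B A := by
  rw [polarAdjugate_apply, polarAdjugate_apply, add_comm, sub_right_comm]

theorem polarAdjugate_mul_mul (P Q A B : Matrix (Fin 3) (Fin 3) R) :
    polarAdjugate (P * A * Q) (P * B * Q) = adjugate Q * polarAdjugate A B * adjugate P := by
  have h : P * A * Q + P * B * Q = P * (A + B) * Q := by noncomm_ring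
  simp only [polarAdjugate_apply, h, adjugate_mul_distrib]
  noncomm_ring

theorem trace_polarAdjugate_mul (A B C : Matrix (Fin 3) (Fin 3) R) :
    trace (polarAdjugate A B * C) =
      det (A + B + C) - det (A + B) - det (A + C) - det (B + C) + det A + det B + det C := by
  simp only [polarAdjugate_apply, trace_fin_three, mul_apply, Fin.sum_univ_three, det_fin_three,
    adjugate_fin_three, add_apply, sub_apply, of_apply, cons_val', cons_val_zero, cons_val_one,
    cons_val, cons_val_fin_one]
  ring

theorem eq_zero_of_forall_polarAdjugate_eq_zero {A : Matrix (Fin 3) (Fin 3) R}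
    (h : ∀ B, polarAdjugate B A = 0) : A = 0 := by
  have h' (B : Matrix (Fin 3) (Fin 3) R) (i j) := congrFun (congrFun (h B) i) j
  have h0 := h' (single 0 0 1)
  have h1 := h' (single 1 1 1)
  have h2 := h' (single 2 2 1)
  ext i j
  simp [polarAdjugate_apply, adjugate_fin_three, Fin.forall_fin_succ] at h0 h1 h2
  fin_cases i <;> fin_cases j <;>
    simp only [Fin.zero_eta, Fin.mk_one, Fin.reduceFinMk, zero_apply] <;>
    grind

variable {k : Type*} [Field k]

theorem exists_isUnit_mul_mul_eq_of_rank_eq {n : Type*} [Fintype n] [DecidableEq n]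
    {A B : Matrix n n k} (h : A.rank = B.rank) :
    ∃ P Q : Matrix n n k, IsUnit P ∧ IsUnit Q ∧ P * A * Q = B := by
  obtain ⟨V, U, e, hV, hU, hA⟩ := exists_rank_normal_form A
  obtain ⟨V', U', e', hV', hU', hB⟩ := exists_rank_normal_form B
  generalize B.rank = r at *
  subst h
  obtain ⟨V', rfl⟩ := hV'
  obtain ⟨U', rfl⟩ := hU'
  set σ : Equiv.Perm n := e'.trans e.symm with hσ
  have hσA : (V * A * U).submatrix σ σ = V' * B * U' := by
    rw [hA, hB, submatrix_submatrix]
    congr 1 <;> ext <;> simp [hσ]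
  have hperm (τ : Equiv.Perm n) : IsUnit (τ.permMatrix k) := by
    rw [isUnit_iff_isUnit_det, det_permutation]
    exact (Units.isUnit _).map (Int.castRingHom k)
  refine ⟨(↑V'⁻¹ : Matrix n n k) * (σ.permMatrix k * V),
    U * (σ⁻¹).permMatrix k * (↑U'⁻¹ : Matrix n n k),
    V'⁻¹.isUnit.mul ((hperm _).mul hV), (hU.mul (hperm _)).mul U'⁻¹.isUnit, ?_⟩
  have h2 : σ.permMatrix k * (V * A * U) * (σ⁻¹).permMatrix k = V' * B * U' := by
    rw [← hσA]
    rw [Equiv.Perm.permMatrix, Equiv.Perm.permMatrix, PEquiv.toMatrix_toPEquiv_mul,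
      PEquiv.mul_toMatrix_toPEquiv, submatrix_submatrix]
    rfl
  calc _ = (↑V'⁻¹ : Matrix n n k) * (σ.permMatrix k * (V * A * U) * (σ⁻¹).permMatrix k) *
        (↑U'⁻¹ : Matrix n n k) := by simp only [mul_assoc]
    _ = B := by rw [h2]; simp [mul_assoc]

theorem finrank_ker_polarAdjugate_le {P Q : Matrix (Fin 3) (Fin 3) k} (hP : IsUnit P)
    (hQ : IsUnit Q) (A : Matrix (Fin 3) (Fin 3) k) :
    Module.finrank k (LinearMap.ker (polarAdjugate A)) ≤
      Module.finrank k (LinearMap.ker (polarAdjugate (P * A * Q))) := by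
  let f := LinearMap.mulLeft k P ∘ₗ LinearMap.mulRight k Q
  have hf (X) : f X = P * X * Q := by simp [f, mul_assoc]
  refine LinearMap.finrank_le_finrank_of_injective (f := f.restrict fun X hX ↦ ?_) ?_
  · rw [LinearMap.mem_ker] at hX ⊢
    rw [hf, polarAdjugate_mul_mul, hX, mul_zero, zero_mul]
  · intro X Y h
    have h' := congrArg Subtype.val h
    simp only [LinearMap.coe_restrict_apply, hf] at h'
    exact Subtype.ext (hP.mul_left_cancel (hQ.mul_right_cancel h'))

theorem finrank_ker_polarAdjugate_eq_of_rank_eq {A B : Matrix (Fin 3) (Fin 3) k}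
    (h : A.rank = B.rank) :
    Module.finrank k (LinearMap.ker (polarAdjugate A)) =
      Module.finrank k (LinearMap.ker (polarAdjugate B)) := by
  apply le_antisymm
  · obtain ⟨P, Q, hP, hQ, rfl⟩ := exists_isUnit_mul_mul_eq_of_rank_eq h
    exact finrank_ker_polarAdjugate_le hP hQ A
  · obtain ⟨P, Q, hP, hQ, rfl⟩ := exists_isUnit_mul_mul_eq_of_rank_eq h.symm
    exact finrank_ker_polarAdjugate_le hP hQ B

end Matrix

/-- Suppose that `r : U → α` separates any two vectors whose supports with respect to a finite
separating family of linear functionals are strictly nested. Then `r` takes at least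
`dim W + 1` values on every subspace `W`. -/
theorem exists_finset_values_of_nested_supports {K U κ α : Type*} [Field K] [Infinite K]
    [AddCommGroup U] [Module K U] [FiniteDimensional K U] [Finite κ] (w : κ → Module.Dual K U)
    (hw : ∀ u, (∀ i, w i u = 0) → u = 0) (r : U → α)
    (hr : ∀ u v, (∀ i, w i u = 0 → w i v = 0) → (∃ i, w i v = 0 ∧ w i u ≠ 0) → r u ≠ r v)
    (n : ℕ) (W : Submodule K U) (hn : n ≤ Module.finrank K W) :
    ∃ S : Finset α, S.card = n + 1 ∧ ∀ s ∈ S, ∃ u ∈ W, r u = s := by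
  classical
  induction n generalizing W with
  | zero => exact ⟨{r 0}, by simp, by simpa using ⟨0, W.zero_mem, rfl⟩⟩
  | succ n ih =>
    obtain ⟨u, huW, hu⟩ := Module.Dual.exists_forall_mem_ne_zero_of_forall_exists W
      (fun i : {i // ∃ x ∈ W, w i x ≠ 0} ↦ w i) (fun i ↦ i.2)
    obtain ⟨x, hxW, hx⟩ := W.exists_mem_ne_zero_of_ne_bot (by rintro rfl; simp at hn)
    obtain ⟨i, hi⟩ : ∃ i, w i x ≠ 0 := by
      contrapose! hx
      exact hw x hx
    have hker := Module.Dual.finrank_ker_add_one_of_ne_zero (f := (w i).domRestrict W)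
      fun h ↦ hi (LinearMap.congr_fun h ⟨x, hxW⟩)
    obtain ⟨S, hS, hSW⟩ := ih ((LinearMap.ker ((w i).domRestrict W)).map W.subtype) (by
      rw [Submodule.finrank_map_subtype_eq]
      omega)
    have hSW' : ∀ s ∈ S, ∃ v ∈ W, w i v = 0 ∧ r v = s := by
      intro s hs
      obtain ⟨_, ⟨v, hv, rfl⟩, h⟩ := hSW s hs
      exact ⟨v, v.2, hv, h⟩
    refine ⟨insert (r u) S, ?_, ?_⟩
    · rw [Finset.card_insert_of_notMem, hS]
      intro hmem
      obtain ⟨v, hvW, hv, hvr⟩ := hSW' _ hmem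
      refine hr u v (fun j hj ↦ ?_) ⟨i, hv, hu ⟨i, x, hxW, hi⟩⟩ hvr.symm
      by_contra hjv
      exact hu ⟨j, v, hvW, hjv⟩ hj
    · intro s hs
      obtain rfl | hs := Finset.mem_insert.1 hs
      · exact ⟨u, huW, rfl⟩
      · obtain ⟨v, hvW, -, h⟩ := hSW' s hs
        exact ⟨v, hvW, h⟩

/-- The `3 × 3` determinant is not a linear combination of at most 14 cubes of linear forms. -/
theorem det_ne_sum_cubes {k ι : Type*} [Field k] [CharZero k] [Fintype ι]
    (hι : Fintype.card ι ≤ 14) (c : ι → k) (m : ι → Module.Dual k (Matrix (Fin 3) (Fin 3) k))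
    (hdet : ∀ A : Matrix (Fin 3) (Fin 3) k, A.det = ∑ j, c j * m j A ^ 3) : False := by
  classical
  have htrace (A B C : Matrix (Fin 3) (Fin 3) k) :
      Matrix.trace (A.polarAdjugate B * C) = ∑ j, 6 * (c j * m j A) * m j B * m j C := by
    rw [Matrix.trace_polarAdjugate_mul]
    simp only [hdet, ← Finset.sum_sub_distrib, ← Finset.sum_add_distrib, map_add]
    exact Finset.sum_congr rfl fun j _ ↦ by ring
  have hzero {A B : Matrix (Fin 3) (Fin 3) k}
      (h : ∀ C, Matrix.trace (A.polarAdjugate B * C) = 0) : A.polarAdjugate B = 0 :=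
    Matrix.ext_iff_trace_mul_right.2 fun C ↦ by simpa using h C
  have hsep (B : Matrix (Fin 3) (Fin 3) k) (hB : ∀ j, m j B = 0) : B = 0 :=
    Matrix.eq_zero_of_forall_polarAdjugate_eq_zero fun A ↦ hzero fun C ↦ by simp [htrace, hB]
  obtain ⟨κ, a, ha, hspan, hli⟩ := exists_linearIndependent' k m
  have : Finite κ := Finite.of_injective a ha
  have := Fintype.ofFinite κ
  have hV : Module.finrank k (Matrix (Fin 3) (Fin 3) k) = 9 := by
    simp [Module.finrank_matrix]
  let φ : Matrix (Fin 3) (Fin 3) k →ₗ[k] κ → k := LinearMap.pi (m ∘ a)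
  have hφ : Function.Injective φ := by
    rw [← LinearMap.ker_eq_bot, LinearMap.ker_eq_bot']
    intro B hB
    refine hsep B fun j ↦ ?_
    have hle : Submodule.span k (Set.range m) ≤ LinearMap.ker (Module.Dual.eval k _ B) := by
      rw [← hspan, Submodule.span_le]
      rintro _ ⟨i, rfl⟩
      exact congrFun hB i
    exact hle (Submodule.subset_span ⟨j, rfl⟩)
  have hκ : Fintype.card κ = 9 := by
    apply le_antisymm
    · simpa [hV, Subspace.dual_finrank_eq] using hli.fintype_card_le_finrank
    · simpa [hV] using LinearMap.finrank_le_finrank_of_injective hφ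
  have hφs : Function.Surjective φ :=
    (LinearMap.injective_iff_surjective_of_finrank_eq_finrank (by simp [hV, hκ])).1 hφ
  let ψ : Matrix (Fin 3) (Fin 3) k →ₗ[k] ((Set.range a)ᶜ : Set ι) → k :=
    LinearMap.pi fun j ↦ m j
  let U := LinearMap.ker ψ
  have hU : 4 ≤ Module.finrank k U := by
    have h1 := LinearMap.finrank_range_add_finrank_ker ψ
    have h2 := (LinearMap.range ψ).finrank_le
    rw [Module.finrank_fintype_fun_eq_card, Fintype.card_compl_set,
      Set.card_range_of_injective ha] at h2
    change 4 ≤ Module.finrank k (LinearMap.ker ψ)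
    omega
  have htraceU (A : U) (B C : Matrix (Fin 3) (Fin 3) k) :
      Matrix.trace (A.1.polarAdjugate B * C) =
        ∑ i, 6 * (c (a i) * m (a i) A) * m (a i) B * m (a i) C := by
    rw [htrace]
    refine (Fintype.sum_of_injective a ha _ _ (fun j hj ↦ ?_) fun _ ↦ rfl).symm
    have hj : m j A = 0 := congrFun (LinearMap.mem_ker.1 A.2) ⟨j, hj⟩
    simp [hj]
  let w : κ → Module.Dual k U := fun i ↦ (c (a i) • m (a i)).domRestrict U
  have hmem (A : U) (B : Matrix (Fin 3) (Fin 3) k) :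
      B ∈ LinearMap.ker A.1.polarAdjugate ↔ ∀ i, w i A = 0 ∨ m (a i) B = 0 := by
    have hwi (i) : w i A = c (a i) * m (a i) A := rfl
    simp_rw [hwi, ← mul_eq_zero]
    refine ⟨fun hB i ↦ ?_, fun hB ↦ hzero fun C ↦ ?_⟩
    · obtain ⟨C, hC⟩ := hφs (Pi.single i 1)
      have hC' (j) : m (a j) C = (Pi.single i 1 : κ → k) j := congrFun hC j
      have h := htraceU A B C
      rw [LinearMap.mem_ker.1 hB] at h
      simpa [hC', Pi.single_apply] using h
    · rw [htraceU]
      exact Finset.sum_eq_zero fun i _ ↦ by linear_combination 6 * m (a i) C * hB i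
  have hw (A : U) (hA : ∀ i, w i A = 0) : A = 0 := by
    refine Subtype.ext (Matrix.eq_zero_of_forall_polarAdjugate_eq_zero fun B ↦ ?_)
    rw [Matrix.polarAdjugate_comm]
    exact (hmem A B).2 fun i ↦ .inl (hA i)
  have hrank (A B : U) (hAB : ∀ i, w i A = 0 → w i B = 0) (h : ∃ i, w i B = 0 ∧ w i A ≠ 0) :
      A.1.rank ≠ B.1.rank := by
    intro heq
    obtain ⟨i, hiB, hiA⟩ := h
    obtain ⟨C, hC⟩ := hφs (Pi.single i 1)
    have hC' (j) : m (a j) C = (Pi.single i 1 : κ → k) j := congrFun hC j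
    have hlt : LinearMap.ker A.1.polarAdjugate < LinearMap.ker B.1.polarAdjugate := by
      refine SetLike.lt_iff_le_and_exists.2 ⟨fun D hD ↦ ?_, C, ?_, ?_⟩
      · exact (hmem B D).2 fun j ↦ ((hmem A D).1 hD j).imp_left (hAB j)
      · refine (hmem B C).2 fun j ↦ ?_
        obtain rfl | hj := eq_or_ne j i
        · exact .inl hiB
        · exact .inr (by simp [hC', hj])
      · intro hCA
        simpa [hC', hiA] using (hmem A C).1 hCA i
    exact (Submodule.finrank_lt_finrank_of_lt hlt).ne
      (Matrix.finrank_ker_polarAdjugate_eq_of_rank_eq heq)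
  obtain ⟨S, hS, hSU⟩ := exists_finset_values_of_nested_supports w hw (fun A ↦ A.1.rank) hrank
    4 ⊤ (by rwa [finrank_top])
  have hsub : S ⊆ Finset.range 4 := by
    intro s hs
    obtain ⟨A, -, rfl⟩ := hSU s hs
    have := A.1.rank_le_width
    simp only [Finset.mem_range]
    omega
  have := Finset.card_le_card hsub
  simp [hS] at this

theorem eval_linForm {k n : Type*} [CommRing k] [Fintype n] (a x : n → k) :
    eval x (linForm a) = a ⬝ᵥ x := by
  simp [linForm, dotProduct]

theorem eval_det3 {k : Type*} [CommRing k] (A : Matrix (Fin 3) (Fin 3) k) :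
    eval (fun p ↦ A p.1 p.2) (det3 k) = A.det := by
  simp [det3, Matrix.det_fin_three]

/-- Over a field of characteristic 0, for every linear form `ℓ` the Waring rank of
`det₃ - ℓ³` is at least 14: it cannot be written as a linear combination of 13 (or fewer)
cubes of linear forms. -/
theorem det3_sub_cube_not_sum_of_13_cubes (k : Type*) [Field k] [CharZero k]
    (b : (Fin 3 × Fin 3) → k) :
    ¬ ∃ (c : Fin 13 → k) (a : Fin 13 → (Fin 3 × Fin 3) → k),
        det3 k - linForm b ^ 3 = ∑ i, C (c i) * linForm (a i) ^ 3 := by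
  rintro ⟨c, a, h⟩
  let form (v : Fin 3 × Fin 3 → k) : Module.Dual k (Matrix (Fin 3) (Fin 3) k) :=
    { toFun := fun A ↦ v ⬝ᵥ fun p ↦ A p.1 p.2
      map_add' := fun A B ↦ dotProduct_add v _ _
      map_smul' := fun r A ↦ dotProduct_smul r v _ }
  refine det_ne_sum_cubes (ι := Fin 14) (by simp) (Fin.cons 1 c)
    (Fin.cons (form b) fun i ↦ form (a i)) fun A ↦ ?_
  have hform (v) : form v A = v ⬝ᵥ fun p ↦ A p.1 p.2 := rfl
  have hA := congrArg (eval fun p ↦ A p.1 p.2) h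
  simp only [map_sub, map_pow, map_sum, map_mul, eval_C, eval_linForm, eval_det3] at hA
  rw [Fin.sum_univ_succ]
  simpa [hform, sub_eq_iff_eq_add'] using hA
end

section
/- Let k be a field of characteristic 0 and d ≥ 3. For every linear form ℓ ∈ k[x_{1,1},…,x_{d,d}], the form det_d − ℓ^d is concise in the d² variables x_{1,1},…,x_{d,d}; equivalently, its d² first partial derivatives are linearly independent over k, i.e. no nonzero constant-coefficient first-order differential operator annihilates det_d − ℓ^d. -/
open MvPolynomial

/-- The generic d×d determinant, a form of degree `d` in the `d²` variables `x_{i,j}`. -/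
noncomputable def detd (k : Type*) [CommRing k] (d : ℕ) : MvPolynomial (Fin d × Fin d) k :=
  Matrix.det (Matrix.of fun i j : Fin d => X (i, j))

/-- The Leibniz rule for a finite product. -/
theorem Derivation.leibniz_finset_prod {R A ι : Type*} [CommSemiring R] [CommSemiring A]
    [Algebra R A] [DecidableEq ι] (D : Derivation R A A) (s : Finset ι) (f : ι → A) :
    D (∏ i ∈ s, f i) = ∑ i ∈ s, (∏ j ∈ s.erase i, f j) * D (f i) := by
  induction s using Finset.induction_on with
  | empty => simp
  | insert a s ha ih =>
    rw [Finset.prod_insert ha, D.leibniz, ih, Finset.sum_insert ha, Finset.erase_insert ha,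
      add_comm, smul_eq_mul, smul_eq_mul, Finset.mul_sum]
    congr 1
    refine Finset.sum_congr rfl fun i hi => ?_
    have hai : a ≠ i := fun h => ha (h ▸ hi)
    rw [Finset.erase_insert_of_ne hai, Finset.prod_insert (by simp [ha]), mul_assoc]

/-- A linear combination of partial derivatives is a derivation. -/
theorem sum_smul_pderiv_eq_mkDerivation {k n : Type*} [CommRing k] [Fintype n]
    (c : n → k) (f : MvPolynomial n k) :
    ∑ i, c i • pderiv i f = mkDerivation k (fun i => C (c i)) f := by
  classical
  have hsum (g : MvPolynomial n k) : (∑ i, c i • pderiv i : Derivation k _ (MvPolynomial n k)) g =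
      ∑ i, c i • pderiv i g := by
    have h := map_sum (Derivation.coeFnAddMonoidHom (R := k) (A := MvPolynomial n k)
      (M := MvPolynomial n k)) (fun i => c i • pderiv i) Finset.univ
    exact (congrFun h g).trans (Finset.sum_apply _ _ _)
  have h : ∑ i, c i • pderiv i = mkDerivation k (fun i => (C (c i) : MvPolynomial n k)) := by
    refine derivation_ext fun j => ?_
    rw [mkDerivation_X, hsum]
    simp [pderiv_X, Pi.single_apply, smul_eq_C_mul]
  rw [← h, hsum]

/-- The derivative of the determinant at `M` in the direction `c`. -/
theorem eval_mkDerivation_detd {k : Type*} [CommRing k] {d : ℕ} (c M : Fin d × Fin d → k) :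
    eval M (mkDerivation k (fun i => C (c i)) (detd k d)) =
      ∑ σ : Equiv.Perm (Fin d), (Equiv.Perm.sign σ : ℤ) •
        ∑ i, (∏ j ∈ Finset.univ.erase i, M (σ j, j)) * c (σ i, i) := by
  simp only [detd, Matrix.det_apply, Units.smul_def, map_sum, map_zsmul, Matrix.of_apply,
    Derivation.leibniz_finset_prod, mkDerivation_X, map_mul, map_prod, eval_X, eval_C]

/-- If `d ≥ 3`, the derivative of the determinant vanishes at every multiple of a matrix unit. -/
theorem eval_single_mkDerivation_detd {k : Type*} [CommRing k] {d : ℕ} (hd : 3 ≤ d)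
    (c : Fin d × Fin d → k) (p : Fin d × Fin d) (t : k) :
    eval (Pi.single p t) (mkDerivation k (fun i => C (c i)) (detd k d)) = 0 := by
  rw [eval_mkDerivation_detd]
  refine Finset.sum_eq_zero fun σ _ => ?_
  rw [Finset.sum_eq_zero, smul_zero]
  intro i _
  obtain ⟨j, hj⟩ : ∃ j, j ∉ ({i, p.2} : Finset (Fin d)) := by
    by_contra! h
    have := Finset.card_le_card (fun j _ => h j : (Finset.univ : Finset (Fin d)) ⊆ {i, p.2})
    have := Finset.card_le_two (a := i) (b := p.2)
    simp only [Finset.card_univ, Fintype.card_fin] at *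
    omega
  simp only [Finset.mem_insert, Finset.mem_singleton, not_or] at hj
  rw [Finset.prod_eq_zero (i := j) (by simp [hj.1]), zero_mul]
  exact Pi.single_eq_of_ne (fun h => hj.2 (congrArg Prod.snd h)) _

/-- The derivative of the determinant at a permutation matrix with one nonzero entry removed
is, up to sign, the coefficient of the direction at that entry. -/
theorem eval_perm_mkDerivation_detd {k : Type*} [CommRing k] {d : ℕ}
    (c : Fin d × Fin d → k) (τ : Equiv.Perm (Fin d)) (q : Fin d) :
    eval (fun ij : Fin d × Fin d => if ij.2 ≠ q ∧ τ ij.2 = ij.1 then 1 else 0)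
      (mkDerivation k (fun i => C (c i)) (detd k d)) = (Equiv.Perm.sign τ : ℤ) • c (τ q, q) := by
  rw [eval_mkDerivation_detd, Finset.sum_eq_single τ]
  · rw [Finset.sum_eq_single q]
    · rw [Finset.prod_eq_one, one_mul]
      intro j hj
      simp [Finset.ne_of_mem_erase hj]
    · intro i _ hi
      rw [Finset.prod_eq_zero (i := q) (by simp [hi.symm]) (by simp), zero_mul]
    · simp
  · intro σ _ hσ
    rw [Finset.sum_eq_zero, smul_zero]
    intro i _
    by_cases hi : i = q
    · subst hi
      obtain ⟨j, hj, hne⟩ : ∃ j, j ≠ i ∧ τ j ≠ σ j := by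
        by_contra! h
        refine hσ (Equiv.ext fun j => ?_)
        by_cases hj : j = i
        · subst hj
          obtain ⟨m, hm⟩ := σ.surjective (τ j)
          by_cases hmj : m = j
          · rw [← hm, hmj]
          · exact absurd (τ.injective ((h m hmj).trans hm)) hmj
        · exact (h j hj).symm
      rw [Finset.prod_eq_zero (i := j) (by simp [hj]) (by simp [hne]), zero_mul]
    · rw [Finset.prod_eq_zero (i := q) (by simp [Ne.symm hi]) (by simp), zero_mul]
  · simp

/-- The derivative of a power of a linear form at `M` in the direction `c`. -/
theorem eval_mkDerivation_linForm_pow {k n : Type*} [CommRing k] [Fintype n] (b c M : n → k)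
    (m : ℕ) :
    eval M (mkDerivation k (fun i => C (c i)) (linForm b ^ m)) =
      m * (∑ i, b i * M i) ^ (m - 1) * ∑ i, b i * c i := by
  simp [Derivation.leibniz_pow, linForm, mul_assoc, mkDerivation_X]

/-- For `d ≥ 3` and any linear form `ℓ` over a field of characteristic 0, the form
`det_d - ℓ^d` is concise: its `d²` first partial derivatives are linearly independent,
i.e. no nonzero constant-coefficient first-order differential operator annihilates it. -/
theorem det_sub_power_concise (k : Type*) [Field k] [CharZero k] (d : ℕ) (hd : 3 ≤ d)
    (b : Fin d × Fin d → k) :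
    LinearIndependent k fun ij : Fin d × Fin d => pderiv ij (detd k d - linForm b ^ d) := by
  rw [Fintype.linearIndependent_iff]
  intro c hc
  rw [sum_smul_pderiv_eq_mkDerivation, map_sub] at hc
  have key : ∀ M : Fin d × Fin d → k,
      eval M (mkDerivation k (fun i => C (c i)) (detd k d)) =
        d * (∑ i, b i * M i) ^ (d - 1) * ∑ i, b i * c i := fun M => by
    rw [← eval_mkDerivation_linForm_pow, sub_eq_zero.mp hc]
  have hbc : ∑ i, b i * c i = 0 := by
    by_contra hne
    refine hne (Finset.sum_eq_zero fun p _ => ?_)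
    have h := key (Pi.single p 1)
    rw [eval_single_mkDerivation_detd hd] at h
    have hd0 : (d : k) ≠ 0 := Nat.cast_ne_zero.mpr (by omega)
    have hb : b p = 0 := by
      simpa [hd0, hne, Pi.single_apply, show d - 1 ≠ 0 by omega] using h.symm
    rw [hb, zero_mul]
  rintro ⟨p, q⟩
  have h := key fun ij : Fin d × Fin d => if ij.2 ≠ q ∧ Equiv.swap p q ij.2 = ij.1 then 1 else 0
  rw [eval_perm_mkDerivation_detd, hbc, mul_zero, Equiv.swap_apply_right] at h
  exact (smul_eq_zero.mp h).resolve_left (Units.ne_zero _)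
end

section
/- Let k be a field of characteristic 0, let μ, λ ∈ k with μ ≠ 0, and let F = μ·det₃ − λ(x₁ + x₅ + x₉)³ ∈ k[x₁,…,x₉], where x₁,…,x₉ are the entries of the generic 3×3 matrix read row by row. Then the apolar ideal F^⊥ ⊆ k[y₁,…,y₉] is generated by the following 36 linearly independent quadrics: y₂², y₃², y₄², y₆², y₇², y₈², y₁² − y₉², y₅² − y₉², y₁y₂, y₁y₃, y₁y₄, y₁y₇, y₂y₃, y₂y₅, y₂y₈, y₃y₆, y₃y₉, y₄y₅, y₄y₆, y₄y₇, y₅y₆, y₅y₈, y₆y₉, y₇y₈, y₇y₉, y₈y₉, y₁y₆ + y₃y₄, y₁y₈ + y₂y₇, y₂y₉ + y₃y₈, y₂y₆ + y₃y₅, y₄y₈ + y₅y₇, y₄y₉ + y₆y₇, y₁y₅ + y₂y₄ − y₉², y₁y₉ + y₃y₇ − y₉², y₅y₉ + y₆y₈ − y₉², and μy₁² − 6λ(y₆y₈ + y₃y₇ + y₂y₄). -/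
open MvPolynomial

/-- The generic 3×3 determinant in the variables `x₁,…,x₉ = X 0,…,X 8`
(the entries of the generic 3×3 matrix, read row by row). -/
noncomputable def det3' (k : Type*) [CommRing k] : MvPolynomial (Fin 9) k :=
  X 0 * X 4 * X 8 - X 0 * X 5 * X 7 - X 1 * X 3 * X 8
    + X 1 * X 5 * X 6 + X 2 * X 3 * X 7 - X 2 * X 4 * X 6

/-- The apolarity action: `diffAction θ F` is the result `θ ∘ F` of applying the
constant-coefficient differential operator obtained from `θ` by substituting
`y_i ↦ ∂/∂x_i` to the polynomial `F`. -/
noncomputable def diffAction {k : Type*} [CommSemiring k] {σ : Type*}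
    (θ F : MvPolynomial σ k) : MvPolynomial σ k :=
  ∑ a ∈ θ.support, ∑ b ∈ F.support,
    monomial (b - a) (θ.coeff a * F.coeff b * ∏ i ∈ a.support, ((b i).descFactorial (a i) : k))

/-- The 36 quadrics (in the dual variables `y₁,…,y₉ = X 0,…,X 8`) generating the apolar
ideal of `μ·det₃ − λ(x₁+x₅+x₉)³`. -/
noncomputable def apolarQuadrics {k : Type*} [CommRing k] (μ lam : k) :
    Fin 36 → MvPolynomial (Fin 9) k :=
  ![X 1 ^ 2, X 2 ^ 2, X 3 ^ 2, X 5 ^ 2, X 6 ^ 2, X 7 ^ 2,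
    X 0 ^ 2 - X 8 ^ 2, X 4 ^ 2 - X 8 ^ 2,
    X 0 * X 1, X 0 * X 2, X 0 * X 3, X 0 * X 6, X 1 * X 2, X 1 * X 4, X 1 * X 7,
    X 2 * X 5, X 2 * X 8,
    X 3 * X 4, X 3 * X 5, X 3 * X 6, X 4 * X 5, X 4 * X 7, X 5 * X 8, X 6 * X 7,
    X 6 * X 8, X 7 * X 8,
    X 0 * X 5 + X 2 * X 3, X 0 * X 7 + X 1 * X 6, X 1 * X 8 + X 2 * X 7,
    X 1 * X 5 + X 2 * X 4, X 3 * X 7 + X 4 * X 6, X 3 * X 8 + X 5 * X 6,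
    X 0 * X 4 + X 1 * X 3 - X 8 ^ 2, X 0 * X 8 + X 2 * X 6 - X 8 ^ 2,
    X 4 * X 8 + X 5 * X 7 - X 8 ^ 2,
    C μ * X 0 ^ 2 - C (6 * lam) * (X 5 * X 7 + X 2 * X 6 + X 1 * X 3)]

section DiffAction

variable {k : Type*} [CommSemiring k] {σ : Type*}

theorem diffAction_eq_sum_of_subset (θ F : MvPolynomial σ k) {s : Finset (σ →₀ ℕ)}
    (hs : θ.support ⊆ s) :
    diffAction θ F = ∑ a ∈ s, ∑ b ∈ F.support,
      monomial (b - a) (θ.coeff a * F.coeff b *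
        ∏ i ∈ a.support, ((b i).descFactorial (a i) : k)) := by
  refine Finset.sum_subset hs fun a _ ha => Finset.sum_eq_zero fun b _ => ?_
  simp [notMem_support_iff.mp ha]

theorem diffAction_add (θ η F : MvPolynomial σ k) :
    diffAction (θ + η) F = diffAction θ F + diffAction η F := by
  classical
  rw [diffAction_eq_sum_of_subset (θ + η) F support_add,
    diffAction_eq_sum_of_subset θ F Finset.subset_union_left,
    diffAction_eq_sum_of_subset η F Finset.subset_union_right, ← Finset.sum_add_distrib]
  refine Finset.sum_congr rfl fun a _ => ?_
  rw [← Finset.sum_add_distrib]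
  refine Finset.sum_congr rfl fun b _ => ?_
  rw [coeff_add, add_mul, add_mul, map_add]

theorem diffAction_C_mul (c : k) (θ F : MvPolynomial σ k) :
    diffAction (C c * θ) F = C c * diffAction θ F := by
  have hs : (C c * θ).support ⊆ θ.support := fun a ha => by
    rw [mem_support_iff, coeff_C_mul] at ha
    exact mem_support_iff.mpr (right_ne_zero_of_mul ha)
  rw [diffAction_eq_sum_of_subset _ F hs, diffAction, Finset.mul_sum]
  refine Finset.sum_congr rfl fun a _ => ?_
  rw [Finset.mul_sum]
  refine Finset.sum_congr rfl fun b _ => ?_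
  rw [coeff_C_mul, C_mul_monomial, mul_assoc c, mul_assoc c]

theorem diffAction_one (F : MvPolynomial σ k) : diffAction 1 F = F := by
  classical
  rw [diffAction_eq_sum_of_subset 1 F (s := {0}) (by
    intro a ha
    by_contra h
    rw [mem_support_iff, coeff_one, if_neg (by simpa [eq_comm] using h)] at ha
    exact ha rfl)]
  simp

theorem diffAction_X_mul [Fintype σ] (i : σ) (θ F : MvPolynomial σ k) :
    diffAction (X i * θ) F = pderiv i (diffAction θ F) := by
  classical
  rw [diffAction, support_X_mul, Finset.sum_map, diffAction, map_sum]
  refine Finset.sum_congr rfl fun a _ => ?_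
  rw [map_sum]
  refine Finset.sum_congr rfl fun b _ => ?_
  have hprod (c : σ →₀ ℕ) : ∏ j ∈ c.support, ((b j).descFactorial (c j) : k) =
      ∏ j, ((b j).descFactorial (c j) : k) :=
    Finset.prod_subset (Finset.subset_univ _) fun j _ hj => by
      simp [Finsupp.notMem_support_iff.mp hj]
  rw [pderiv_monomial, addLeftEmbedding_apply, coeff_X_mul, hprod, hprod,
    ← Finset.mul_prod_erase _ _ (Finset.mem_univ i),
    ← Finset.mul_prod_erase Finset.univ (fun j => ((b j).descFactorial (a j) : k))
      (Finset.mem_univ i), tsub_add_eq_tsub_tsub_swap]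
  congr 1
  have herase : ∏ j ∈ Finset.univ.erase i,
      ((b j).descFactorial ((Finsupp.single i 1 + a : σ →₀ ℕ) j) : k) =
      ∏ j ∈ Finset.univ.erase i, ((b j).descFactorial (a j) : k) :=
    Finset.prod_congr rfl fun j hj => by
      simp [Finsupp.single_eq_of_ne (Finset.ne_of_mem_erase hj)]
  rw [herase, Finsupp.add_apply, Finsupp.single_eq_same, add_comm 1, Nat.descFactorial_succ,
    Nat.cast_mul, Finsupp.tsub_apply]
  ring

theorem diffAction_X [Fintype σ] (i : σ) (F : MvPolynomial σ k) :
    diffAction (X i) F = pderiv i F := by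
  rw [← mul_one (X i), diffAction_X_mul, diffAction_one]

theorem diffAction_C (c : k) (F : MvPolynomial σ k) : diffAction (C c) F = C c * F := by
  rw [← mul_one (C c), diffAction_C_mul, diffAction_one, mul_one]

theorem diffAction_zero (F : MvPolynomial σ k) : diffAction 0 F = 0 := by
  simp [diffAction]

theorem diffAction_mul_eq_zero [Fintype σ] {θ F : MvPolynomial σ k} (h : diffAction θ F = 0)
    (η : MvPolynomial σ k) : diffAction (η * θ) F = 0 := by
  induction η using MvPolynomial.induction_on with
  | C c => rw [diffAction_C_mul, h, mul_zero]
  | add p q hp hq => rw [add_mul, diffAction_add, hp, hq, add_zero]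
  | mul_X p i hp => rw [mul_comm p, mul_assoc, diffAction_X_mul, hp, map_zero]

/-- The apolar ideal of a polynomial. -/
noncomputable def apolarIdeal [Fintype σ] (F : MvPolynomial σ k) : Ideal (MvPolynomial σ k) where
  carrier := {θ | diffAction θ F = 0}
  add_mem' {θ η} (hθ : _ = _) (hη : _ = _) :=
    show _ = _ by rw [diffAction_add, hθ, hη, add_zero]
  zero_mem' := diffAction_zero F
  smul_mem' := fun η _ hθ => diffAction_mul_eq_zero hθ η

end DiffAction

theorem diffAction_sub {k : Type*} [CommRing k] {σ : Type*} (θ η F : MvPolynomial σ k) :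
    diffAction (θ - η) F = diffAction θ F - diffAction η F := by
  rw [eq_sub_iff_add_eq, ← diffAction_add, sub_add_cancel]

set_option maxHeartbeats 1000000 in
theorem diffAction_apolarQuadrics {k : Type*} [CommRing k] (μ lam : k) (n : Fin 36) :
    diffAction (apolarQuadrics μ lam n)
      (C μ * det3' k - C lam * (X 0 + X 4 + X 8) ^ 3) = 0 := by
  have hC : (C 6 : MvPolynomial (Fin 9) k) = 6 := map_ofNat C 6
  fin_cases n <;>
    simp [apolarQuadrics, det3', diffAction_add, diffAction_sub, diffAction_C_mul,
      diffAction_X_mul, diffAction_X, pow_succ, mul_assoc] <;>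
    first | ring1 | (rw [hC]; ring1)

set_option maxHeartbeats 1000000 in
theorem linearIndependent_apolarQuadrics {k : Type*} [Field k] {μ : k} (lam : k) (hμ : μ ≠ 0) :
    LinearIndependent k (apolarQuadrics (k := k) μ lam) := by
  rw [Fintype.linearIndependent_iff]
  intro c hc
  have H (v : Fin 9 → k) := congrArg (eval v) hc
  simp [Fin.sum_univ_succ, apolarQuadrics, smul_eval] at H
  have hsq (i : Fin 9) := H (Pi.single i 1)
  have hmix (i j : Fin 9) := congrArg₂ (· - ·) (H (Pi.single i 1 + Pi.single j 1))
    (congrArg₂ (· + ·) (hsq i) (hsq j))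
  clear H hc
  have hsquares (p : Fin 7) : c (![0, 1, 2, 3, 4, 5, 7] p) = 0 := by
    have h := hsq (![1, 2, 3, 5, 6, 7, 4] p)
    clear hsq hmix
    fin_cases p <;> simpa using h
  have hproducts (p : Fin 27) : c (![8, 9, 10, 11, 12, 13, 14, 15, 16, 17, 18, 19, 20, 21, 22, 23,
      24, 25, 26, 27, 28, 29, 30, 31, 32, 33, 34] p) = 0 := by
    have h := hmix
      (![0, 0, 0, 0, 1, 1, 1, 2, 2, 3, 3, 3, 4, 4, 5, 6, 6, 7, 0, 0, 1, 1, 3, 3, 0, 0, 4] p)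
      (![1, 2, 3, 6, 2, 4, 7, 5, 8, 4, 5, 6, 5, 7, 8, 7, 8, 8, 5, 7, 8, 5, 7, 8, 4, 8, 8] p)
    clear hsq hmix hsquares
    fin_cases p <;> simp at h ⊢ <;> linear_combination h
  simp [Fin.forall_fin_succ] at hsquares hproducts
  have h₆ : c 6 = 0 := by simpa [hsquares, hproducts] using hsq 8
  have h₃₅ : c 35 = 0 := by simpa [h₆, hμ] using hsq 0
  clear hsq hmix
  intro n
  fin_cases n <;> simp_all
/-- The quadratic monomials whose classes span the degree-two part of the quotient by the apolar
ideal of `μ·det₃ − λ(x₁+x₅+x₉)³`. -/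
noncomputable def standardQuadrics (k : Type*) [CommRing k] : Fin 9 → MvPolynomial (Fin 9) k :=
  ![X 5 * X 7, X 5 * X 6, X 3 * X 7, X 2 * X 7, X 2 * X 6, X 1 * X 6, X 1 * X 5, X 2 * X 3,
    X 1 * X 3]

set_option maxHeartbeats 1000000 in
theorem standardCombination_eq_zero {k : Type*} [Field k] {μ : k} (lam : k)
    (hμ : μ ≠ 0) {c d : k} {a b : Fin 9 → k}
    (h : diffAction (C c + ∑ i, C (a i) * X i + ∑ i, C (b i) * standardQuadrics k i
      + C d * (X 1 * X 5 * X 6)) (C μ * det3' k - C lam * (X 0 + X 4 + X 8) ^ 3) = 0) :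
    c = 0 ∧ a = 0 ∧ b = 0 ∧ d = 0 := by
  have H (v : Fin 9 → k) := congrArg (eval v) h
  simp [standardQuadrics, Fin.sum_univ_succ, diffAction_add, mul_assoc,
    diffAction_C_mul, diffAction_X_mul, diffAction_X, diffAction_C,
    det3', pow_succ] at H
  clear h
  obtain rfl : d = 0 := by simpa [hμ] using H 0
  have h₁ : b 1 = 0 := by simpa [hμ] using H (Pi.single 1 1)
  have h₂ : b 2 = 0 := by simpa [hμ] using H (Pi.single 2 1)
  have h₃ : b 3 = 0 := by simpa [hμ] using H (Pi.single 3 1)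
  have h₅ : b 5 = 0 := by simpa [hμ] using H (Pi.single 5 1)
  have h₆ : b 6 = 0 := by simpa [hμ] using H (Pi.single 6 1)
  have h₇ : b 7 = 0 := by simpa [hμ] using H (Pi.single 7 1)
  simp only [h₁, h₂, h₃, h₅, h₆, h₇, zero_mul, add_zero, zero_add] at H
  have ha : a = 0 := by
    funext i
    have h := H (![Pi.single 5 1 + Pi.single 7 1, Pi.single 5 1 + Pi.single 6 1,
      Pi.single 3 1 + Pi.single 7 1, Pi.single 2 1 + Pi.single 7 1, Pi.single 2 1 + Pi.single 6 1,
      Pi.single 1 1 + Pi.single 6 1, Pi.single 1 1 + Pi.single 5 1, Pi.single 2 1 + Pi.single 3 1,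
      Pi.single 1 1 + Pi.single 3 1] i)
    clear H
    fin_cases i <;> simpa [hμ] using h
  subst ha
  obtain rfl : c = 0 := by
    simpa [hμ] using H ![0, 1, 0, 0, 0, 1, 1, 0, 0]
  have h₀ : b 0 = 0 := by simpa [hμ] using H (Pi.single 0 1)
  have h₄ : b 4 = 0 := by simpa [hμ] using H (Pi.single 4 1)
  have h₈ : b 8 = 0 := by simpa [hμ] using H (Pi.single 8 1)
  refine ⟨rfl, rfl, ?_, rfl⟩
  funext i
  fin_cases i <;> assumption

section Relations

variable {k : Type*} [Field k] {μ lam : k} {A : Type*} [CommRing A] [Algebra k A] {y : Fin 9 → A}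

set_option maxHeartbeats 4000000 in
theorem mul_aeval_standardQuadrics (h : ∀ n, aeval y (apolarQuadrics μ lam n) = 0) (i j : Fin 9) :
    y i * aeval y (standardQuadrics k j) = if i = j then
      (![-1, 1, 1, 1, -1, 1, 1, 1, -1] : Fin 9 → k) i • (y 1 * y 5 * y 6) else 0 := by
  simp only [Fin.forall_fin_succ, apolarQuadrics] at h
  simp at h
  obtain ⟨h₀, h₁, h₂, h₃, h₄, h₅, -, -, h⟩ := h
  fin_cases i <;> fin_cases j <;> simp [standardQuadrics] <;> grind

theorem mul_mul_mul_eq_zero (h : ∀ n, aeval y (apolarQuadrics μ lam n) = 0) (i : Fin 9) :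
    y i * (y 1 * y 5 * y 6) = 0 := by
  have h₁ := mul_aeval_standardQuadrics h i 1
  have h₅ := mul_aeval_standardQuadrics h i 5
  simp [standardQuadrics] at h₁ h₅
  by_cases hi : i = 1
  · rw [if_neg (by simp [hi])] at h₅
    linear_combination y 5 * h₅
  · rw [if_neg hi] at h₁
    linear_combination y 1 * h₁

theorem mul_mem_of_standardQuadrics_mem (hμ : μ ≠ 0)
    (h : ∀ n, aeval y (apolarQuadrics μ lam n) = 0) {Q : Submodule k A}
    (hQ : ∀ n, aeval y (standardQuadrics k n) ∈ Q) (i j : Fin 9) : y i * y j ∈ Q := by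
  have hneg {u v : A} (huv : u + v = 0) (hv : v ∈ Q) : u ∈ Q :=
    eq_neg_of_add_eq_zero_left huv ▸ Q.neg_mem hv
  have hsub {u v w : A} (huv : u + v - w = 0) (hv : v ∈ Q) (hw : w ∈ Q) : u ∈ Q :=
    eq_sub_of_add_eq (sub_eq_zero.mp huv) ▸ Q.sub_mem hw hv
  have hzero {u : A} (hu : u = 0) : u ∈ Q := hu ▸ Q.zero_mem
  simp only [Fin.forall_fin_succ, apolarQuadrics, standardQuadrics] at h hQ
  simp at h hQ
  obtain ⟨q₀, q₁, q₂, q₃, q₄, q₅, q₆, q₇, q₈⟩ := hQ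
  obtain ⟨h₁₁, h₂₂, h₃₃, h₅₅, h₆₆, h₇₇, h₀₀, h₄₄, h₀₁, h₀₂, h₀₃, h₀₆, h₁₂, h₁₄, h₁₇, h₂₅, h₂₈,
    h₃₄, h₃₅, h₃₆, h₄₅, h₄₇, h₅₈, h₆₇, h₆₈, h₇₈, h₀₅, h₀₇, h₁₈, h₂₄, h₄₆, h₃₈, h₀₄, h₀₈, h₄₈,
    hμ'⟩ := h
  have hs : y 0 ^ 2 ∈ Q := by
    have hy : y 0 ^ 2 = (μ⁻¹ * (6 * lam)) • (y 5 * y 7 + y 2 * y 6 + y 1 * y 3) := by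
      rw [mul_smul, eq_inv_smul_iff₀ hμ, Algebra.smul_def, Algebra.smul_def, map_mul]
      exact sub_eq_zero.mp hμ'
    exact hy ▸ Q.smul_mem _ (Q.add_mem (Q.add_mem q₀ q₄) q₈)
  have hs₈ : y 8 ^ 2 ∈ Q := sub_eq_zero.mp h₀₀ ▸ hs
  have hs₄ : y 4 ^ 2 ∈ Q := (sub_eq_zero.mp h₄₄).symm ▸ hs₈
  have m₂₄ := hneg ((add_comm _ _).trans h₂₄) q₆
  have m₄₆ := hneg ((add_comm _ _).trans h₄₆) q₂
  have m₀₅ := hneg h₀₅ q₇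
  have m₀₇ := hneg h₀₇ q₅
  have m₁₈ := hneg h₁₈ q₃
  have m₃₈ := hneg h₃₈ q₁
  have m₀₄ := hsub h₀₄ q₈ hs₈
  have m₀₈ := hsub h₀₈ q₄ hs₈
  have m₄₈ := hsub h₄₈ q₀ hs₈
  wlog hij : i ≤ j generalizing i j
  · rw [mul_comm]
    exact this j i (le_of_not_ge hij)
  rcases hij.eq_or_lt with rfl | hij
  · rw [← pow_two]
    fin_cases i <;> first | assumption | exact hzero ‹_›
  · fin_cases i <;> fin_cases j <;>
      first | exact absurd hij (by decide) | assumption | exact hzero ‹_›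

theorem exists_aeval_eq_standardCombination (hμ : μ ≠ 0)
    (h : ∀ n, aeval y (apolarQuadrics μ lam n) = 0) (θ : MvPolynomial (Fin 9) k) :
    ∃ (c d : k) (a b : Fin 9 → k), aeval y θ = aeval y (C c + ∑ i, C (a i) * X i +
      ∑ i, C (b i) * standardQuadrics k i + C d * (X 1 * X 5 * X 6)) := by
  let M : Submodule k A := Submodule.span k {1} ⊔ Submodule.span k (Set.range y) ⊔
    Submodule.span k (Set.range fun n => aeval y (standardQuadrics k n)) ⊔
    Submodule.span k {y 1 * y 5 * y 6}
  have h₀ : Submodule.span k {1} ≤ M :=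
    le_sup_of_le_left (le_sup_of_le_left le_sup_left)
  have h₁ : Submodule.span k (Set.range y) ≤ M := le_sup_of_le_left (le_sup_of_le_left le_sup_right)
  have h₂ : Submodule.span k (Set.range fun n => aeval y (standardQuadrics k n)) ≤ M :=
    le_sup_of_le_left le_sup_right
  have h₃ : Submodule.span k {y 1 * y 5 * y 6} ≤ M := le_sup_right
  have hM (i : Fin 9) : M ≤ M.comap (LinearMap.mulLeft k (y i)) := by
    refine sup_le (sup_le (sup_le ?_ ?_) ?_) ?_ <;> rw [Submodule.span_le]
    · rintro _ rfl
      simpa using h₁ (Submodule.subset_span ⟨i, rfl⟩)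
    · rintro _ ⟨j, rfl⟩
      exact h₂ (mul_mem_of_standardQuadrics_mem hμ h
        (fun n => Submodule.subset_span (Set.mem_range_self n)) i j)
    · rintro _ ⟨j, rfl⟩
      simp only [SetLike.mem_coe, Submodule.mem_comap, LinearMap.mulLeft_apply,
        mul_aeval_standardQuadrics h]
      split_ifs
      · exact M.smul_mem _ (h₃ (Submodule.mem_span_singleton_self _))
      · exact M.zero_mem
    · rintro _ rfl
      simp [mul_mul_mul_eq_zero h]
  have hθ : aeval y θ ∈ M := by
    induction θ using MvPolynomial.induction_on with
    | C c =>
      rw [aeval_C, Algebra.algebraMap_eq_smul_one]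
      exact M.smul_mem _ (h₀ (Submodule.mem_span_singleton_self _))
    | add p q hp hq => simpa using M.add_mem hp hq
    | mul_X p i hp => simpa [mul_comm] using hM i hp
  obtain ⟨_, hu, _, hd, hθ⟩ := Submodule.mem_sup.mp hθ
  obtain ⟨_, hv, _, hb, rfl⟩ := Submodule.mem_sup.mp hu
  obtain ⟨_, hc, _, ha, rfl⟩ := Submodule.mem_sup.mp hv
  obtain ⟨c, rfl⟩ := Submodule.mem_span_singleton.mp hc
  obtain ⟨d, rfl⟩ := Submodule.mem_span_singleton.mp hd
  obtain ⟨a, rfl⟩ := (Submodule.mem_span_range_iff_exists_fun k).mp ha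
  obtain ⟨b, rfl⟩ := (Submodule.mem_span_range_iff_exists_fun k).mp hb
  exact ⟨c, d, a, b, by simp [← hθ, Algebra.smul_def]⟩

end Relations

/-- For `μ ≠ 0`, the apolar ideal of `F = μ·det₃ − λ(x₁+x₅+x₉)³` is generated by the listed
36 linearly independent quadrics. -/
theorem apolar_ideal_det3_sub_cube (k : Type*) [Field k] [CharZero k]
    (μ lam : k) (hμ : μ ≠ 0) :
    LinearIndependent k (apolarQuadrics (k := k) μ lam) ∧
      ∀ θ : MvPolynomial (Fin 9) k,
        diffAction θ (C μ * det3' k - C lam * (X 0 + X 4 + X 8) ^ 3) = 0 ↔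
          θ ∈ Ideal.span (Set.range (apolarQuadrics (k := k) μ lam)) := by
  refine ⟨linearIndependent_apolarQuadrics lam hμ, fun θ => ?_⟩
  set F := C μ * det3' k - C lam * (X 0 + X 4 + X 8) ^ 3
  set I := Ideal.span (Set.range (apolarQuadrics (k := k) μ lam))
  have hle : I ≤ apolarIdeal F := Ideal.span_le.mpr <| by
    rintro _ ⟨n, rfl⟩
    exact diffAction_apolarQuadrics μ lam n
  refine ⟨fun hθ => ?_, fun hθ => hle hθ⟩
  have haeval (p : MvPolynomial (Fin 9) k) :
      aeval (fun i => Ideal.Quotient.mkₐ k I (X i)) p = Ideal.Quotient.mkₐ k I p := by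
    rw [← comp_aeval_apply, aeval_X_left_apply]
  obtain ⟨c, d, a, b, h⟩ := exists_aeval_eq_standardCombination hμ
    (y := fun i => Ideal.Quotient.mkₐ k I (X i)) (lam := lam) (fun n => by
      rw [haeval]
      exact Ideal.Quotient.eq_zero_iff_mem.mpr (Ideal.subset_span ⟨n, rfl⟩)) θ
  rw [haeval, haeval] at h
  have hmem := Ideal.Quotient.eq.mp h
  have hsub := hle hmem
  have hzero : diffAction _ F = 0 :=
    (Submodule.sub_mem_iff_right (apolarIdeal F) (show θ ∈ apolarIdeal F from hθ)).mp hsub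
  obtain ⟨rfl, rfl, rfl, rfl⟩ := standardCombination_eq_zero lam hμ hzero
  simpa using hmem
end
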